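/- Let G be a non-complete simple graph on n vertices achieving its toughness at a set S (t(G) = |S|/c(G−S)) such that the union of some subfamily of components of G − S has exactly (n−|S|)/2 vertices. Then t(G) ≥ μ_2/(μ_n − δ). -/

import Mathlib

open SimpleGraph Matrix

/-- The (unordered) eigenvalues of the Laplacian matrix `L = D - A` of `G`. -/
noncomputable def lapEigs {V : Type*} [Fintype V] [DecidableEq V]
    (G : SimpleGraph V) [DecidableRel G.Adj] : V → ℝ :=
  (SimpleGraph.posSemidef_lapMatrix ℝ G).1.eigenvalues

/-- `μ : Fin n → ℝ` is the nondecreasing list of the Laplacian eigenvalues of `G`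
(so `μ 0 = μ_1 ≤ μ 1 = μ_2 ≤ … ≤ μ (n-1) = μ_n`). -/
def IsLapSpectrum {V : Type*} [Fintype V] [DecidableEq V]
    (G : SimpleGraph V) [DecidableRel G.Adj] {n : ℕ} (μ : Fin n → ℝ) : Prop :=
  Monotone μ ∧ ∃ σ : Fin n ≃ V, ∀ i, μ i = lapEigs G (σ i)

/-- The number of connected components of `G - S`. -/
noncomputable def numComp {V : Type*} (G : SimpleGraph V) (S : Finset V) : ℕ :=
  Nat.card (G.induce ((↑S : Set V)ᶜ)).ConnectedComponent

/-!
Write `E x = xᵀ L x` for the Dirichlet energy and `M = μ_n`. Centring an indicator vector gives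
`n E(1_T) ≤ M |T| |Tᶜ|`, so a lower bound `a |T| ≤ E(1_T)` forces `n a ≤ M |Tᶜ|`. This
is used twice.

* One vertex from each component of `G - S` makes an independent set `I` with `|I| = c(G - S)`, and
  `δ |I| ≤ E(1_I)`. Hence `n δ ≤ M (n - c)`, that is, `M c ≤ n (M - δ)`.
* If `V ∖ S = X ∪ Y` is the split into halves, then `f = 1_X - 1_Y` sums to zero, and `f` does not
  change sign along an edge, so `E(1_{X ∪ Y}) = E(|f|) = E(f) ≥ μ_2 |X ∪ Y|`. Hence
  `n μ_2 ≤ M |S|`.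

Together, `n μ_2 c ≤ M c |S| ≤ n (M - δ) |S|`.
-/

open scoped Finset

section RayleighQuotient

variable {ι : Type*} [Fintype ι] [DecidableEq ι] {A : Matrix ι ι ℝ} (hA : A.IsHermitian)

lemma sum_eigenvectorBasis_dotProduct_mul_dotProduct (x y : ι → ℝ) :
    ∑ i, (hA.eigenvectorBasis i ⬝ᵥ x) * (hA.eigenvectorBasis i ⬝ᵥ y) = x ⬝ᵥ y := by
  have parseval := hA.eigenvectorBasis.sum_inner_mul_inner (WithLp.toLp 2 x) (WithLp.toLp 2 y)
  simp only [EuclideanSpace.inner_eq_star_dotProduct, star_trivial] at parseval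
  rw [dotProduct_comm x y, ← parseval]
  exact Finset.sum_congr rfl fun i _ => by rw [dotProduct_comm _ y]

lemma eigenvectorBasis_dotProduct_mulVec (i : ι) (x : ι → ℝ) :
    hA.eigenvectorBasis i ⬝ᵥ (A *ᵥ x) = hA.eigenvalues i * (hA.eigenvectorBasis i ⬝ᵥ x) := by
  have hsymm : Aᵀ = A := hA
  rw [dotProduct_mulVec, ← mulVec_transpose, hsymm, hA.mulVec_eigenvectorBasis, smul_dotProduct,
    smul_eq_mul]

lemma dotProduct_self_eq_sum_sq (x : ι → ℝ) :
    x ⬝ᵥ x = ∑ i, (hA.eigenvectorBasis i ⬝ᵥ x) ^ 2 := by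
  simp only [← sum_eigenvectorBasis_dotProduct_mul_dotProduct hA x x, sq]

lemma dotProduct_mulVec_self_eq_sum_eigenvalues_mul_sq (x : ι → ℝ) :
    x ⬝ᵥ (A *ᵥ x) = ∑ i, hA.eigenvalues i * (hA.eigenvectorBasis i ⬝ᵥ x) ^ 2 := by
  rw [← sum_eigenvectorBasis_dotProduct_mul_dotProduct hA]
  refine Finset.sum_congr rfl fun i _ => ?_
  rw [eigenvectorBasis_dotProduct_mulVec]
  ring

lemma dotProduct_mulVec_self_le_of_eigenvalues_le {M : ℝ} (hM : ∀ i, hA.eigenvalues i ≤ M)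
    (x : ι → ℝ) : x ⬝ᵥ (A *ᵥ x) ≤ M * (x ⬝ᵥ x) := by
  rw [dotProduct_mulVec_self_eq_sum_eigenvalues_mul_sq hA, dotProduct_self_eq_sum_sq hA,
    Finset.mul_sum]
  gcongr with i
  exact hM i

lemma eigenvectorBasis_dotProduct_eq_zero_of_eigenvalues_ne {a : ℝ} {v : ι → ℝ}
    (hv : A *ᵥ v = a • v) {i : ι} (hi : hA.eigenvalues i ≠ a) :
    hA.eigenvectorBasis i ⬝ᵥ v = 0 := by
  have key := eigenvectorBasis_dotProduct_mulVec hA i v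
  rw [hv, dotProduct_smul, smul_eq_mul] at key
  exact (mul_eq_mul_right_iff.1 key).resolve_left hi.symm

lemma eigenvectorBasis_dotProduct_eq_zero_of_orthogonal {v x : ι → ℝ} (hv : v ≠ 0) {k : ι}
    (hvk : ∀ i ≠ k, hA.eigenvectorBasis i ⬝ᵥ v = 0) (hvx : v ⬝ᵥ x = 0) :
    hA.eigenvectorBasis k ⬝ᵥ x = 0 := by
  have expand (y : ι → ℝ) :
      (hA.eigenvectorBasis k ⬝ᵥ v) * (hA.eigenvectorBasis k ⬝ᵥ y) = v ⬝ᵥ y := by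
    rw [← sum_eigenvectorBasis_dotProduct_mul_dotProduct hA v y, Finset.sum_eq_single k]
    · exact fun i _ hi => by rw [hvk i hi, zero_mul]
    · exact fun hk => absurd (Finset.mem_univ k) hk
  have hne : hA.eigenvectorBasis k ⬝ᵥ v ≠ 0 := fun h =>
    hv (dotProduct_self_eq_zero.1 (by rw [← expand v, h, zero_mul]))
  exact (mul_eq_zero.1 ((expand x).trans hvx)).resolve_left hne

lemma le_dotProduct_mulVec_self_of_orthogonal {a m : ℝ} {v x : ι → ℝ} (hv : v ≠ 0)
    (hAv : A *ᵥ v = a • v) {k : ι} (ha : a ≤ hA.eigenvalues k)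
    (hm : ∀ i ≠ k, m ≤ hA.eigenvalues i) (hvx : v ⬝ᵥ x = 0) :
    m * (x ⬝ᵥ x) ≤ x ⬝ᵥ (A *ᵥ x) := by
  rw [dotProduct_mulVec_self_eq_sum_eigenvalues_mul_sq hA, dotProduct_self_eq_sum_sq hA,
    Finset.mul_sum]
  refine Finset.sum_le_sum fun i _ => ?_
  rcases ne_or_eq i k with hi | rfl
  · exact mul_le_mul_of_nonneg_right (hm i hi) (sq_nonneg _)
  rcases le_or_gt m a with hma | ham
  · exact mul_le_mul_of_nonneg_right (hma.trans ha) (sq_nonneg _)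
  · have hx : hA.eigenvectorBasis i ⬝ᵥ x = 0 :=
      eigenvectorBasis_dotProduct_eq_zero_of_orthogonal hA hv (fun j hj =>
        eigenvectorBasis_dotProduct_eq_zero_of_eigenvalues_ne hA hAv
          (ham.trans_le (hm j hj)).ne') hvx
    simp [hx]

end RayleighQuotient

section Indicators

variable {V : Type*} [Fintype V]

lemma indicator_one_dotProduct (T : Finset V) (x : V → ℝ) :
    (T : Set V).indicator 1 ⬝ᵥ x = ∑ i ∈ T, x i := by
  classical simp [dotProduct, Set.indicator_apply]

lemma indicator_one_dotProduct_self (T : Finset V) :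
    (T : Set V).indicator (1 : V → ℝ) ⬝ᵥ (T : Set V).indicator 1 = #T := by
  rw [indicator_one_dotProduct,
    Finset.sum_congr rfl fun i hi => Set.indicator_of_mem (Finset.mem_coe.2 hi) _]
  simp

lemma sum_indicator_one (T : Finset V) : ∑ i, (T : Set V).indicator (1 : V → ℝ) i = #T := by
  rw [← dotProduct_one, indicator_one_dotProduct]
  simp

lemma cast_card_compl [DecidableEq V] (T : Finset V) :
    (#Tᶜ : ℝ) = Fintype.card V - #T := by
  rw [Finset.card_compl, Nat.cast_sub T.card_le_univ]

lemma sub_const_dotProduct_self (x : V → ℝ) (a : ℝ) :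
    (fun i => x i - a) ⬝ᵥ (fun i => x i - a) =
      x ⬝ᵥ x - 2 * a * ∑ i, x i + Fintype.card V * a ^ 2 := by
  calc (fun i => x i - a) ⬝ᵥ (fun i => x i - a) = ∑ i, (x i * x i - 2 * a * x i + a ^ 2) :=
      Finset.sum_congr rfl fun i _ => by ring
    _ = x ⬝ᵥ x - 2 * a * ∑ i, x i + Fintype.card V * a ^ 2 := by
      simp [dotProduct, Finset.sum_add_distrib, Finset.mul_sum]

end Indicators

section DirichletEnergy

variable {V : Type*} [Fintype V] [DecidableEq V] (G : SimpleGraph V) [DecidableRel G.Adj]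

/-- The Dirichlet energy `xᵀ L x` of a real function `x` on the vertices of `G`, where `L` is the
Laplacian matrix. For `x = 1_T` it is the number of edges leaving `T`. -/
def dirichletEnergy (x : V → ℝ) : ℝ :=
  x ⬝ᵥ (G.lapMatrix ℝ *ᵥ x)

lemma dirichletEnergy_eq_sum_adj (x : V → ℝ) :
    dirichletEnergy G x = (∑ i, ∑ j, if G.Adj i j then (x i - x j) ^ 2 else 0) / 2 := by
  rw [dirichletEnergy, ← lapMatrix_toLinearMap₂', toLinearMap₂'_apply']

lemma dirichletEnergy_sub_const (x : V → ℝ) (a : ℝ) :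
    dirichletEnergy G (fun i => x i - a) = dirichletEnergy G x := by
  simp only [dirichletEnergy_eq_sum_adj, sub_sub_sub_cancel_right]

lemma dirichletEnergy_abs {x : V → ℝ} (hx : ∀ i j, G.Adj i j → 0 ≤ x i * x j) :
    dirichletEnergy G |x| = dirichletEnergy G x := by
  simp only [dirichletEnergy_eq_sum_adj]
  congr! 4 with i _ j _ hij
  simp only [Pi.abs_apply, sub_sq, sq_abs, mul_assoc, ← abs_mul, abs_of_nonneg (hx i j hij)]

lemma lapEigs_nonneg (i : V) : 0 ≤ lapEigs G i :=
  (posSemidef_lapMatrix ℝ G).eigenvalues_nonneg i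

lemma le_dirichletEnergy_of_sum_eq_zero {m : ℝ} {k : V} (hm : ∀ i ≠ k, m ≤ lapEigs G i)
    {x : V → ℝ} (hx : ∑ i, x i = 0) : m * (x ⬝ᵥ x) ≤ dirichletEnergy G x := by
  have hker : G.lapMatrix ℝ *ᵥ (1 : V → ℝ) = (0 : ℝ) • 1 :=
    (lapMatrix_mulVec_const_eq_zero G).trans (zero_smul ℝ _).symm
  have : Nonempty V := ⟨k⟩
  exact le_dotProduct_mulVec_self_of_orthogonal _ one_ne_zero hker (lapEigs_nonneg G k) hm
    (by rwa [one_dotProduct])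

lemma card_mul_dirichletEnergy_indicator_le {M : ℝ} (hM : ∀ i, lapEigs G i ≤ M)
    (T : Finset V) :
    Fintype.card V * dirichletEnergy G ((T : Set V).indicator 1) ≤ M * (#T * #Tᶜ) := by
  rcases isEmpty_or_nonempty V with _ | _
  · simp [Finset.eq_empty_of_isEmpty]
  set N : ℝ := (Fintype.card V : ℝ) with hN
  have hN0 : 0 < N := Nat.cast_pos.2 Fintype.card_pos
  set x : V → ℝ := (T : Set V).indicator 1
  have hnorm : (fun i => x i - #T / N) ⬝ᵥ (fun i => x i - #T / N) = #T * #Tᶜ / N := by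
    rw [sub_const_dotProduct_self, indicator_one_dotProduct_self, sum_indicator_one,
      cast_card_compl, ← hN]
    field_simp
    ring
  have hcentred :=
    dotProduct_mulVec_self_le_of_eigenvalues_le _ hM (fun i => x i - #T / N)
  rw [← dirichletEnergy, dirichletEnergy_sub_const, hnorm] at hcentred
  calc N * dirichletEnergy G x ≤ N * (M * (#T * #Tᶜ / N)) := by gcongr
    _ = M * (#T * #Tᶜ) := by field_simp

lemma card_mul_le_of_mul_card_le_dirichletEnergy {M a : ℝ} (hM : ∀ i, lapEigs G i ≤ M)
    {T : Finset V} (hT : T.Nonempty)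
    (ha : a * #T ≤ dirichletEnergy G ((T : Set V).indicator 1)) :
    Fintype.card V * a ≤ M * #Tᶜ := by
  have hT0 : (0 : ℝ) < #T := by exact_mod_cast hT.card_pos
  refine le_of_mul_le_mul_right ?_ hT0
  calc Fintype.card V * a * #T = Fintype.card V * (a * #T) := mul_assoc _ _ _
    _ ≤ Fintype.card V * dirichletEnergy G ((T : Set V).indicator 1) := by gcongr
    _ ≤ M * (#T * #Tᶜ) := card_mul_dirichletEnergy_indicator_le G hM T
    _ = M * #Tᶜ * #T := by ring

end DirichletEnergy

section IndependentSets

variable {V : Type*}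

lemma exists_isNIndepSet_numComp [Finite V] (G : SimpleGraph V) (S : Finset V) :
    ∃ I : Finset V, G.IsNIndepSet (numComp G S) I := by
  classical
  let H := G.induce ((S : Set V)ᶜ)
  let rep (c : H.ConnectedComponent) : V := c.out
  have := Fintype.ofFinite H.ConnectedComponent
  have hrep (c d : H.ConnectedComponent) (h : H.Reachable c.out d.out) : c = d := by
    rw [← c.out_eq, ← d.out_eq]
    exact ConnectedComponent.sound h
  have hinj : rep.Injective := fun c d h => hrep c d (Subtype.ext h ▸ .rfl)
  refine ⟨Finset.univ.image rep, ?_, ?_⟩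
  · simp only [Finset.coe_image, Finset.coe_univ, Set.image_univ]
    rintro _ ⟨c, rfl⟩ _ ⟨d, rfl⟩ hne hadj
    have hH : H.Adj c.out d.out := hadj
    exact hne (congrArg rep (hrep c d hH.reachable))
  · rw [Finset.card_image_of_injective _ hinj, Finset.card_univ, numComp,
      Nat.card_eq_fintype_card]

variable [Fintype V] {G : SimpleGraph V}

lemma numComp_pos_iff {S : Finset V} : 0 < numComp G S ↔ S ≠ Finset.univ := by
  let H := G.induce ((S : Set V)ᶜ)
  have hfin : Finite H.ConnectedComponent := Quot.finite _
  have hvertex : Nonempty H.ConnectedComponent ↔ Nonempty ((S : Set V)ᶜ : Set V) :=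
    ⟨.map Quot.out, .map H.connectedComponentMk⟩
  rw [numComp, Nat.card_pos_iff, and_iff_left hfin, hvertex, Set.nonempty_coe_sort,
    Set.nonempty_compl, Ne, Finset.coe_eq_univ]

variable [DecidableEq V] [DecidableRel G.Adj]

lemma dirichletEnergy_indicator_of_isIndepSet {I : Finset V} (hI : G.IsIndepSet I) :
    dirichletEnergy G ((I : Set V).indicator 1) = ∑ i ∈ I, (G.degree i : ℝ) := by
  rw [dirichletEnergy, indicator_one_dotProduct]
  refine Finset.sum_congr rfl fun i hi => ?_
  have hnbr : ∑ j ∈ G.neighborFinset i, (I : Set V).indicator (1 : V → ℝ) j = 0 :=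
    Finset.sum_eq_zero fun j hj => Set.indicator_of_notMem (fun hjI =>
      have hadj := (G.mem_neighborFinset i j).1 hj
      hI hi hjI hadj.ne hadj) _
  rw [lapMatrix_mulVec_apply, hnbr, Set.indicator_of_mem (Finset.mem_coe.2 hi), Pi.one_apply,
    mul_one, sub_zero]

lemma card_mul_minDegree_le_of_isIndepSet {M : ℝ} (hM : ∀ i, lapEigs G i ≤ M) {I : Finset V}
    (hI : G.IsIndepSet I) (hne : I.Nonempty) :
    Fintype.card V * (G.minDegree : ℝ) ≤ M * #Iᶜ := by
  refine card_mul_le_of_mul_card_le_dirichletEnergy G hM hne ?_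
  rw [dirichletEnergy_indicator_of_isIndepSet hI, mul_comm, ← nsmul_eq_mul]
  exact Finset.card_nsmul_le_sum _ _ _ fun i _ => by exact_mod_cast G.minDegree_le_degree i

end IndependentSets

section Separators

variable {V : Type*} {X Y : Finset V}

lemma abs_indicator_sub_indicator [DecidableEq V] (hXY : Disjoint X Y) :
    |(X : Set V).indicator (1 : V → ℝ) - (Y : Set V).indicator 1| =
      ((X ∪ Y : Finset V) : Set V).indicator 1 := by
  ext i
  have hdisj : i ∈ X → i ∉ Y := fun h => Finset.disjoint_left.1 hXY h
  by_cases hX : i ∈ X <;> by_cases hY : i ∈ Y <;> simp_all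

variable {G : SimpleGraph V}

lemma indicator_sub_indicator_mul_nonneg (hno : ∀ x ∈ X, ∀ y ∈ Y, ¬ G.Adj x y) {i j : V}
    (hij : G.Adj i j) :
    0 ≤ ((X : Set V).indicator (1 : V → ℝ) i - (Y : Set V).indicator (1 : V → ℝ) i) *
      ((X : Set V).indicator (1 : V → ℝ) j - (Y : Set V).indicator (1 : V → ℝ) j) := by
  classical
  have h₁ : i ∈ X → j ∉ Y := fun hi hj => hno i hi j hj hij
  have h₂ : j ∈ X → i ∉ Y := fun hj hi => hno j hj i hi hij.symm
  by_cases hiX : i ∈ X <;> by_cases hjX : j ∈ X <;> by_cases hiY : i ∈ Y <;>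
    by_cases hjY : j ∈ Y <;> simp_all

variable [Fintype V] [DecidableEq V] [DecidableRel G.Adj]

lemma card_mul_le_mul_card_compl_union {M m : ℝ} (hM : ∀ i, lapEigs G i ≤ M) {k : V}
    (hm : ∀ i ≠ k, m ≤ lapEigs G i) (hXY : Disjoint X Y)
    (hno : ∀ x ∈ X, ∀ y ∈ Y, ¬ G.Adj x y) (hcard : #X = #Y) (hne : (X ∪ Y).Nonempty) :
    Fintype.card V * m ≤ M * #(X ∪ Y)ᶜ := by
  refine card_mul_le_of_mul_card_le_dirichletEnergy G hM hne ?_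
  set f : V → ℝ := (X : Set V).indicator 1 - (Y : Set V).indicator 1 with hf
  have habs : |f| = ((X ∪ Y : Finset V) : Set V).indicator 1 := abs_indicator_sub_indicator hXY
  have hsum : ∑ i, f i = 0 := by
    simp only [hf, Pi.sub_apply, Finset.sum_sub_distrib, sum_indicator_one, hcard, sub_self]
  have hnorm : f ⬝ᵥ f = #(X ∪ Y) := by
    calc f ⬝ᵥ f = |f| ⬝ᵥ |f| := by simp only [dotProduct, Pi.abs_apply, abs_mul_abs_self]
      _ = #(X ∪ Y) := by rw [habs, indicator_one_dotProduct_self]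
  calc m * #(X ∪ Y) = m * (f ⬝ᵥ f) := by rw [hnorm]
    _ ≤ dirichletEnergy G f := le_dirichletEnergy_of_sum_eq_zero G hm hsum
    _ = dirichletEnergy G |f| :=
      (dirichletEnergy_abs G fun _ _ => indicator_sub_indicator_mul_nonneg hno).symm
    _ = dirichletEnergy G (((X ∪ Y : Finset V) : Set V).indicator 1) := by rw [habs]

end Separators

namespace IsLapSpectrum

variable {V : Type*} [Fintype V] [DecidableEq V] {G : SimpleGraph V} [DecidableRel G.Adj]
  {n : ℕ} {μ : Fin n → ℝ}

lemma lapEigs_le_last (hμ : IsLapSpectrum G μ) (hn : n - 1 < n) (i : V) :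
    lapEigs G i ≤ μ ⟨n - 1, hn⟩ := by
  obtain ⟨hmono, σ, hσ⟩ := hμ
  rw [← σ.apply_symm_apply i, ← hσ]
  exact hmono (Fin.le_def.2 (Nat.le_sub_one_of_lt (σ.symm i).2))

lemma exists_forall_ne_le_lapEigs (hμ : IsLapSpectrum G μ) (hn : 1 < n) :
    ∃ k, ∀ i ≠ k, μ ⟨1, hn⟩ ≤ lapEigs G i := by
  obtain ⟨hmono, σ, hσ⟩ := hμ
  refine ⟨σ ⟨0, by omega⟩, fun i hi => ?_⟩
  rw [← σ.apply_symm_apply i, ← hσ]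
  have hpos : (σ.symm i).val ≠ 0 := fun h => hi (σ.symm_apply_eq.1 (Fin.ext h))
  exact hmono (Fin.le_def.2 (Nat.one_le_iff_ne_zero.2 hpos))

end IsLapSpectrum

lemma div_sub_le_div_of_mul_le {K : Type*} [Field K] [LinearOrder K] [IsStrictOrderedRing K]
    {N m M d s c : K} (hN : 0 < N) (hM : 0 ≤ M) (hs : 0 ≤ s) (hc : 0 < c)
    (hm : N * m ≤ M * s) (hd : N * d ≤ M * (N - c)) : m / (M - d) ≤ s / c := by
  have hMc : M * c ≤ N * (M - d) := by linarith
  have hMd : 0 ≤ M - d := nonneg_of_mul_nonneg_right ((mul_nonneg hM hc.le).trans hMc) hN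
  -- `M = d` happens for edgeless graphs; the left-hand side is then `m / 0 = 0`.
  refine div_le_of_le_mul₀ hMd (by positivity) ?_
  rw [div_mul_eq_mul_div, le_div_iff₀ hc]
  refine le_of_mul_le_mul_left ?_ hN
  calc N * (m * c) = N * m * c := by ring
    _ ≤ M * s * c := by gcongr
    _ = M * c * s := by ring
    _ ≤ N * (M - d) * s := by gcongr
    _ = N * (s * (M - d)) := by ring

theorem stmt7_general {V : Type*} [Fintype V] [DecidableEq V] (G : SimpleGraph V)
    [DecidableRel G.Adj] {n : ℕ} (hn : 2 ≤ n) (μ : Fin n → ℝ) (hμ : IsLapSpectrum G μ)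
    (S X Y : Finset V) (hS : S ≠ Finset.univ) (hXY : Disjoint X Y) (hU : X ∪ Y = Sᶜ)
    (hno : ∀ x ∈ X, ∀ y ∈ Y, ¬ G.Adj x y) (hhalf : 2 * #X = #Sᶜ) :
    μ ⟨1, by omega⟩ / (μ ⟨n - 1, by omega⟩ - G.minDegree) ≤ (#S : ℝ) / numComp G S := by
  have hc : 0 < numComp G S := numComp_pos_iff.2 hS
  obtain ⟨I, hI, hIcard⟩ := exists_isNIndepSet_numComp G S
  have hIne : I.Nonempty := Finset.card_pos.1 (hIcard ▸ hc)
  obtain ⟨k, hgap⟩ := hμ.exists_forall_ne_le_lapEigs hn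
  have hmax := hμ.lapEigs_le_last (by omega)
  have hδ := card_mul_minDegree_le_of_isIndepSet hmax hI hIne
  rw [cast_card_compl, hIcard] at hδ
  have hcard : #X = #Y := by
    have hunion := Finset.card_union_of_disjoint hXY
    rw [hU] at hunion
    omega
  have hUne : (X ∪ Y).Nonempty := by
    rwa [hU, Finset.nonempty_iff_ne_empty, Ne, Finset.compl_eq_empty_iff]
  have hμ₂ := card_mul_le_mul_card_compl_union hmax hgap hXY hno hcard hUne
  rw [hU, compl_compl] at hμ₂
  have hV : 0 < Fintype.card V := Fintype.card_pos_iff.2 ⟨k⟩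
  exact div_sub_le_div_of_mul_le (mod_cast hV) ((lapEigs_nonneg G k).trans (hmax k))
    (Nat.cast_nonneg _) (mod_cast hc) hμ₂ hδ

theorem stmt7 {n : ℕ} [NeZero n] (hn : 2 ≤ n) (G : SimpleGraph (Fin n)) [DecidableRel G.Adj]
    (hnc : G ≠ ⊤) (μ : Fin n → ℝ) (hμ : IsLapSpectrum G μ)
    (S : Finset (Fin n)) (hdis : 2 ≤ numComp G S)
    (hmin : ∀ T : Finset (Fin n), 2 ≤ numComp G T →
      (S.card : ℝ) / numComp G S ≤ (T.card : ℝ) / numComp G T)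
    (hhalf : ∃ X Y : Finset (Fin n), Disjoint X Y ∧ X ∪ Y = Sᶜ ∧
      (∀ x ∈ X, ∀ y ∈ Y, ¬ G.Adj x y) ∧ 2 * X.card = n - S.card) :
    μ ⟨1, by omega⟩ / (μ ⟨n - 1, by omega⟩ - G.minDegree) ≤ (S.card : ℝ) / numComp G S := by
  obtain ⟨X, Y, hXY, hU, hno, hX⟩ := hhalf
  exact stmt7_general G hn μ hμ S X Y (numComp_pos_iff.1 (zero_lt_two.trans_le hdis)) hXY hU hno
    (by rw [hX, Finset.card_compl, Fintype.card_fin])
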